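/- Let α⁰ ∈ ℝ^m, β⁰ ∈ ℝ^n, and let k be an integer with 1 ≤ k ≤ n. The pair (0^m, 0^n) of zero vectors is an optimal solution of the projection problem (minimize ½‖α − α⁰‖² + ½‖β − β⁰‖² over Γ_k) if and only if k·α_[1]⁰ + Σ_{j=1}^k β_[j]⁰ ≤ 0, where α_[1]⁰ is the largest entry of α⁰ and β_[1]⁰ ≥ ... ≥ β_[k]⁰ are the k largest entries of β⁰. -/

import Mathlib

/-!
Maximizing a linear form over the vectors with entries in `[0, c]` and total mass `k c` gives `c`
times the sum of its `k` largest coefficients: compare every coefficient with the `k`-th largest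
one. On the part of `Γ_k` of total mass `s`, this applies to `β` with `c = s / k`, and to `α` with
`1` and `s` in place of `k` and `c`, so the maximum of `⟨α, α⁰⟩ + ⟨β, β⁰⟩` there is
`(s / k) (k α⁰_[1] + Σ_{j ≤ k} β⁰_[j])`. By the variational characterization of projections onto a
convex set, `(0, 0)` is optimal exactly when this form is nonpositive on `Γ_k`.
-/

/-- The `k`-th largest value among `v 1, ..., v n` (1-indexed `k`). -/
noncomputable def kthLargest {n : ℕ} (v : Fin n → ℝ) (k : ℕ) : ℝ :=
  ((List.ofFn v).insertionSort (· ≥ ·)).getD (k - 1) 0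

/-- The feasible set `Γ_k`: nonnegative `(α, β)` with matching sums and
`β_j ≤ (1/k) Σ_i α_i` for every `j`. -/
def TopkSimplex (m n k : ℕ) (α : Fin m → ℝ) (β : Fin n → ℝ) : Prop :=
  (∀ i, 0 ≤ α i) ∧ (∀ j, 0 ≤ β j) ∧ (∑ i, α i) = (∑ j, β j) ∧
    ∀ j, β j ≤ (1 / (k : ℝ)) * ∑ i, α i

/-- The projection objective `½‖α − α⁰‖² + ½‖β − β⁰‖²`. -/
noncomputable def projObj {m n : ℕ} (α0 : Fin m → ℝ) (β0 : Fin n → ℝ)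
    (α : Fin m → ℝ) (β : Fin n → ℝ) : ℝ :=
  (1 / 2) * (∑ i, (α i - α0 i) ^ 2) + (1 / 2) * (∑ j, (β j - β0 j) ^ 2)

open scoped Finset InnerProductSpace

section Sorting

variable {n : ℕ}

lemma exists_perm_antitone_comp {α : Type*} [LinearOrder α] (v : Fin n → α) :
    ∃ σ : Equiv.Perm (Fin n), Antitone (v ∘ σ) :=
  ⟨Tuple.sort (OrderDual.toDual ∘ v),
    monotone_toDual_comp_iff.mp (Tuple.monotone_sort (OrderDual.toDual ∘ v))⟩

lemma insertionSort_ge_ofFn_eq_of_antitone {α : Type*} [LinearOrder α] {v : Fin n → α}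
    {σ : Equiv.Perm (Fin n)} (hσ : Antitone (v ∘ σ)) :
    (List.ofFn v).insertionSort (· ≥ ·) = List.ofFn (v ∘ σ) :=
  ((List.perm_insertionSort _ _).trans (σ.ofFn_comp_perm v).symm).eq_of_pairwise'
    (List.pairwise_insertionSort _ _) (List.pairwise_ofFn.mpr fun _ _ hij => hσ hij.le)

lemma kthLargest_add_one_of_antitone {v : Fin n → ℝ} {σ : Equiv.Perm (Fin n)}
    (hσ : Antitone (v ∘ σ)) (j : Fin n) : kthLargest v (j + 1) = v (σ j) := by
  simp [kthLargest, insertionSort_ge_ofFn_eq_of_antitone hσ]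

lemma exists_finset_sum_eq_sum_kthLargest {k : ℕ} (hk : 1 ≤ k) (hkn : k ≤ n) (v : Fin n → ℝ) :
    ∃ s : Finset (Fin n), #s = k ∧ ∑ i ∈ s, v i = ∑ j ∈ Finset.range k, kthLargest v (j + 1) ∧
      (∀ i ∈ s, kthLargest v k ≤ v i) ∧ ∀ i ∉ s, v i ≤ kthLargest v k := by
  obtain ⟨σ, hσ⟩ := exists_perm_antitone_comp v
  have hlast : kthLargest v k = v (σ ⟨k - 1, by omega⟩) := by
    simpa [Nat.sub_add_cancel hk] using kthLargest_add_one_of_antitone hσ ⟨k - 1, by omega⟩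
  refine ⟨Finset.univ.map ((Fin.castLEEmb hkn).trans σ.toEmbedding), by simp, ?_, ?_, ?_⟩
  · rw [Finset.sum_map, Finset.sum_range]
    exact Finset.sum_congr rfl fun j _ =>
      (kthLargest_add_one_of_antitone hσ (Fin.castLE hkn j)).symm
  · simp only [Finset.forall_mem_map, hlast]
    exact fun j _ => hσ (Fin.le_def.mpr (Nat.le_sub_one_of_lt j.isLt))
  · intro i hi
    have hki : k ≤ σ.symm i := by
      by_contra! hlt
      exact hi (Finset.mem_map.mpr ⟨⟨σ.symm i, hlt⟩, Finset.mem_univ _, by simp⟩)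
    have hle : (⟨k - 1, by omega⟩ : Fin n) ≤ σ.symm i :=
      Fin.le_def.mpr ((Nat.sub_le k 1).trans hki)
    simpa [hlast] using hσ hle

end Sorting

lemma dotProduct_le_mul_sum_of_threshold {ι R : Type*} [Fintype ι] [CommRing R] [PartialOrder R]
    [IsOrderedRing R] {s : Finset ι} {v w : ι → R} {c θ : R} (hw : ∀ i ∉ s, 0 ≤ w i)
    (hwc : ∀ i ∈ s, w i ≤ c) (hsum : ∑ i, w i = #s * c) (hs : ∀ i ∈ s, θ ≤ v i)
    (hsc : ∀ i ∉ s, v i ≤ θ) : w ⬝ᵥ v ≤ c * ∑ i ∈ s, v i := by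
  classical
  have hterm (i : ι) : w i * (v i - θ) ≤ if i ∈ s then c * (v i - θ) else 0 := by
    split_ifs with hi
    · exact mul_le_mul_of_nonneg_right (hwc i hi) (sub_nonneg.mpr (hs i hi))
    · exact mul_nonpos_of_nonneg_of_nonpos (hw i hi) (sub_nonpos.mpr (hsc i hi))
  calc
    w ⬝ᵥ v = ∑ i, w i * (v i - θ) + #s * c * θ := by
      simp only [dotProduct, mul_sub, Finset.sum_sub_distrib, ← Finset.sum_mul, hsum,
        sub_add_cancel]
    _ ≤ ∑ i ∈ s, c * (v i - θ) + #s * c * θ := by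
      gcongr
      simpa using Finset.sum_le_sum fun i (_ : i ∈ Finset.univ) => hterm i
    _ = c * ∑ i ∈ s, v i := by
      rw [← Finset.mul_sum, Finset.sum_sub_distrib, Finset.sum_const, nsmul_eq_mul]
      ring

lemma dotProduct_le_mul_sum_kthLargest {n k : ℕ} (hk : 1 ≤ k) (hkn : k ≤ n) {v w : Fin n → ℝ}
    {c : ℝ} (hw : ∀ i, 0 ≤ w i) (hwc : ∀ i, w i ≤ c) (hsum : ∑ i, w i = k * c) :
    w ⬝ᵥ v ≤ c * ∑ j ∈ Finset.range k, kthLargest v (j + 1) := by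
  obtain ⟨s, hcard, hs, hle, hge⟩ := exists_finset_sum_eq_sum_kthLargest hk hkn v
  rw [← hs]
  exact dotProduct_le_mul_sum_of_threshold (fun i _ => hw i) (fun i _ => hwc i)
    (by rw [hsum, hcard]) hle hge

lemma forall_norm_le_norm_sub_iff_inner_nonpos {E : Type*} [NormedAddCommGroup E]
    [InnerProductSpace ℝ E] {K : Set E} (hK : Convex ℝ K) (h0 : 0 ∈ K) (u : E) :
    (∀ x ∈ K, ‖u‖ ≤ ‖u - x‖) ↔ ∀ x ∈ K, ⟪u, x⟫_ℝ ≤ 0 := by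
  have hbdd : BddBelow (Set.range fun x : K => ‖u - x‖) :=
    ⟨0, Set.forall_mem_range.mpr fun _ => norm_nonneg _⟩
  have : Nonempty K := ⟨0, h0⟩
  have hproj := norm_eq_iInf_iff_real_inner_le_zero hK (u := u) h0
  simp only [sub_zero] at hproj
  rw [← hproj]
  refine ⟨fun h => le_antisymm (le_ciInf fun x => h x x.2) ?_, fun h x hx => ?_⟩
  · simpa using ciInf_le hbdd ⟨0, h0⟩
  · exact h.trans_le (ciInf_le hbdd ⟨x, hx⟩)

section EuclideanModel

variable {m n : ℕ}

lemma projObj_eq_norm_sub_sq (α0 α : Fin m → ℝ) (β0 β : Fin n → ℝ) :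
    projObj α0 β0 α β =
      1 / 2 * ‖WithLp.toLp 2 (Sum.elim α0 β0) - WithLp.toLp 2 (Sum.elim α β)‖ ^ 2 := by
  rw [norm_sub_rev, EuclideanSpace.real_norm_sq_eq, Fintype.sum_sum_type, projObj, mul_add]
  simp

lemma projObj_zero_le_iff (α0 α : Fin m → ℝ) (β0 β : Fin n → ℝ) :
    projObj α0 β0 (fun _ => 0) (fun _ => 0) ≤ projObj α0 β0 α β ↔
      ‖WithLp.toLp 2 (Sum.elim α0 β0)‖ ≤
        ‖WithLp.toLp 2 (Sum.elim α0 β0) - WithLp.toLp 2 (Sum.elim α β)‖ := by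
  have hzero : WithLp.toLp 2 (Sum.elim (fun _ : Fin m => (0 : ℝ)) fun _ : Fin n => 0) = 0 := by
    ext (i | j) <;> rfl
  rw [projObj_eq_norm_sub_sq, projObj_eq_norm_sub_sq, hzero, sub_zero,
    mul_le_mul_iff_of_pos_left one_half_pos, sq_le_sq₀ (norm_nonneg _) (norm_nonneg _)]

end EuclideanModel

namespace TopkSimplex

variable {m n k : ℕ}

variable (m n k) in
/-- The feasible set `Γ_k` as a subset of the Euclidean space `ℝ^(m + n)`, with the coordinates of
`α` indexed by `Fin m` and those of `β` by `Fin n`. -/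
def euclideanSet : Set (EuclideanSpace ℝ (Fin m ⊕ Fin n)) :=
  {x | TopkSimplex m n k (fun i => x (.inl i)) fun j => x (.inr j)}

lemma forall_mem_euclideanSet {P : EuclideanSpace ℝ (Fin m ⊕ Fin n) → Prop} :
    (∀ x ∈ euclideanSet m n k, P x) ↔
      ∀ α β, TopkSimplex m n k α β → P (WithLp.toLp 2 (Sum.elim α β)) := by
  refine ⟨fun h α β hαβ => h _ hαβ, fun h x hx => ?_⟩
  simpa [← Function.comp_def] using h _ _ hx

lemma zero_mem_euclideanSet : 0 ∈ euclideanSet m n k := by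
  simp [euclideanSet, TopkSimplex]

lemma convex_euclideanSet : Convex ℝ (euclideanSet m n k) := by
  rintro x ⟨hxα, hxβ, hxsum, hxle⟩ y ⟨hyα, hyβ, hysum, hyle⟩ a b ha hb -
  simp only [euclideanSet, Set.mem_ofPred_eq, TopkSimplex, PiLp.add_apply, PiLp.smul_apply,
    smul_eq_mul, Finset.sum_add_distrib, ← Finset.mul_sum]
  refine ⟨fun i => ?_, fun j => ?_, by rw [hxsum, hysum], fun j => ?_⟩
  · exact add_nonneg (mul_nonneg ha (hxα i)) (mul_nonneg hb (hyα i))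
  · exact add_nonneg (mul_nonneg ha (hxβ j)) (mul_nonneg hb (hyβ j))
  · linarith [mul_le_mul_of_nonneg_left (hxle j) ha, mul_le_mul_of_nonneg_left (hyle j) hb]

lemma forall_projObj_zero_le_iff_dotProduct_nonpos (α0 : Fin m → ℝ) (β0 : Fin n → ℝ) :
    (∀ α β, TopkSimplex m n k α β →
        projObj α0 β0 (fun _ => 0) (fun _ => 0) ≤ projObj α0 β0 α β) ↔
      ∀ α β, TopkSimplex m n k α β → α ⬝ᵥ α0 + β ⬝ᵥ β0 ≤ 0 := by
  have hproj := forall_norm_le_norm_sub_iff_inner_nonpos (convex_euclideanSet (k := k))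
    zero_mem_euclideanSet (WithLp.toLp 2 (Sum.elim α0 β0))
  simpa only [forall_mem_euclideanSet, ← projObj_zero_le_iff, EuclideanSpace.inner_toLp_toLp,
    star_trivial, sumElim_dotProduct_sumElim] using hproj

lemma dotProduct_add_dotProduct_le {α : Fin m → ℝ} {β : Fin n → ℝ}
    (h : TopkSimplex m n k α β) (hm : 1 ≤ m) (hk : 1 ≤ k) (hkn : k ≤ n)
    (α0 : Fin m → ℝ) (β0 : Fin n → ℝ) :
    α ⬝ᵥ α0 + β ⬝ᵥ β0 ≤ (1 / (k : ℝ) * ∑ i, α i) *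
      (k * kthLargest α0 1 + ∑ j ∈ Finset.range k, kthLargest β0 (j + 1)) := by
  obtain ⟨hα, hβ, hsum, hle⟩ := h
  have hmass : ∑ i, α i = k * (1 / k * ∑ i, α i) := by field_simp
  have hαle : α ⬝ᵥ α0 ≤ (∑ i, α i) * kthLargest α0 1 := by
    simpa using dotProduct_le_mul_sum_kthLargest le_rfl hm (v := α0) hα
      (fun i => Finset.single_le_sum (fun i _ => hα i) (Finset.mem_univ i)) (by simp)
  have hβle := dotProduct_le_mul_sum_kthLargest hk hkn (v := β0) hβ hle (hsum ▸ hmass)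
  calc
    α ⬝ᵥ α0 + β ⬝ᵥ β0 ≤ (∑ i, α i) * kthLargest α0 1 +
        (1 / (k : ℝ) * ∑ i, α i) * ∑ j ∈ Finset.range k, kthLargest β0 (j + 1) :=
      add_le_add hαle hβle
    _ = _ := by field_simp

lemma ite_mem_of_card_eq (hk : 1 ≤ k) {s : Finset (Fin m)} {t : Finset (Fin n)} (hs : #s = 1)
    (ht : #t = k) :
    TopkSimplex m n k (fun i => if i ∈ s then (k : ℝ) else 0) fun j => if j ∈ t then 1 else 0 := by
  refine ⟨fun i => by positivity, fun j => by positivity, by simp [hs, ht], fun j => ?_⟩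
  have hmass : 1 / (k : ℝ) * ∑ i, (if i ∈ s then (k : ℝ) else 0) = 1 := by
    have : (k : ℝ) ≠ 0 := by positivity
    simp [hs, this]
  rw [hmass]
  exact ite_le_one le_rfl zero_le_one

lemma exists_dotProduct_add_dotProduct_eq (hm : 1 ≤ m) (hk : 1 ≤ k) (hkn : k ≤ n)
    (α0 : Fin m → ℝ) (β0 : Fin n → ℝ) :
    ∃ α β, TopkSimplex m n k α β ∧ α ⬝ᵥ α0 + β ⬝ᵥ β0 =
      k * kthLargest α0 1 + ∑ j ∈ Finset.range k, kthLargest β0 (j + 1) := by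
  obtain ⟨s, hscard, hs, -⟩ := exists_finset_sum_eq_sum_kthLargest le_rfl hm α0
  obtain ⟨t, htcard, ht, -⟩ := exists_finset_sum_eq_sum_kthLargest hk hkn β0
  refine ⟨_, _, ite_mem_of_card_eq hk hscard htcard, ?_⟩
  rw [Finset.sum_range_one, zero_add] at hs
  simp [dotProduct, ← Finset.mul_sum, hs, ht]

end TopkSimplex

/-- zero case: `(0, 0)` is optimal for the projection onto `Γ_k`
iff `k·α⁰_[1] + Σ_{j=1}^k β⁰_[j] ≤ 0`. -/
theorem projection_topk_simplex_zero_optimal_iff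
    (m n k : ℕ) (hm : 1 ≤ m) (hk1 : 1 ≤ k) (hkn : k ≤ n)
    (α0 : Fin m → ℝ) (β0 : Fin n → ℝ) :
    (∀ α β, TopkSimplex m n k α β →
        projObj α0 β0 (fun _ => 0) (fun _ => 0) ≤ projObj α0 β0 α β) ↔
      (k : ℝ) * kthLargest α0 1 + (∑ j ∈ Finset.range k, kthLargest β0 (j + 1)) ≤ 0 := by
  rw [TopkSimplex.forall_projObj_zero_le_iff_dotProduct_nonpos]
  constructor
  · intro hpolar
    obtain ⟨α, β, hαβ, hvalue⟩ := TopkSimplex.exists_dotProduct_add_dotProduct_eq hm hk1 hkn α0 β0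
    exact hvalue ▸ hpolar α β hαβ
  · intro hle α β hαβ
    have hmass : 0 ≤ 1 / (k : ℝ) * ∑ i, α i :=
      mul_nonneg (by positivity) (Finset.sum_nonneg fun i _ => hαβ.1 i)
    exact (hαβ.dotProduct_add_dotProduct_le hm hk1 hkn α0 β0).trans
      (mul_nonpos_of_nonneg_of_nonpos hmass hle)
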